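/- Let F = C(q^{1/2}, t^{1/2}) and let x, y, z be the operators on F(X) given by x = X + X^{-1}, y = V(X)ϖ + V(X^{-1})ϖ^{-1}, z = q^{-1/2}X^{-1}V(X)ϖ + q^{-1/2}XV(X^{-1})ϖ^{-1}, with V(X) = (t^{1/2}X - t^{-1/2}X^{-1})/(X - X^{-1}) and (ϖf)(X) = f(qX). Then, writing A = q^{-1/2} and λ = q^{-1}t, the cubic relation A^{-2}x^2 + A^{2}y^2 + A^{-2}z^2 - A^{-1}xyz = (A^2 + A^{-2} + λ + λ^{-1})·Id holds in End F(X). -/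

import Mathlib

noncomputable section

/-!
Write `xy = z₁ + z₀` with `z₁ = X V(X) ϖ + X⁻¹ V(X⁻¹) ϖ⁻¹` and
`z₀ = X⁻¹ V(X) ϖ + X V(X⁻¹) ϖ⁻¹`. Since `z = q^{-1/2} z₀`, the terms `q z²` and `-q^{1/2} xyz`
combine to `-z₁z₀`. The coefficients of `ϖ²` and `ϖ⁻²` in `q⁻¹y² - z₁z₀` vanish for arbitrary
functions in place of `V(X)` and `V(X⁻¹)`; only the order-zero coefficient sees the formula for `V`.
Since `V(Y) (Y - Y⁻¹)` is a Laurent polynomial in `Y`, the denominators of `ϖ(V(X⁻¹))` and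
`ϖ⁻¹(V(X))` cancel there, and what remains is a combination of the symmetrizations
`V(X) + V(X⁻¹)` and `X² V(X) + X⁻² V(X⁻¹)`, in which the last denominator cancels too.
-/

/-- The left-hand side of the cubic-surface relation in the skein algebra of the once-punctured
torus, at skein parameter `A = s⁻¹`. -/
def skeinCubic {R A : Type*} [Field R] [Ring A] [Algebra R A] (s : R) (x y z : A) : A :=
  s ^ 2 • (x * x) + (s ^ 2)⁻¹ • (y * y) + s ^ 2 • (z * z) - s • (x * (y * z))

theorem skeinCubic_inv_smul_of_mul_eq_add {R A : Type*} [Field R] [Ring A] [Algebra R A] {s : R}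
    (hs : s ≠ 0) {x y z₀ z₁ : A} (hxy : x * y = z₁ + z₀) :
    skeinCubic s x y (s⁻¹ • z₀) = s ^ 2 • (x * x) + ((s ^ 2)⁻¹ • (y * y) - z₁ * z₀) := by
  have hzz : s ^ 2 • ((s⁻¹ • z₀) * (s⁻¹ • z₀)) = z₀ * z₀ := by
    rw [smul_mul_smul_comm, smul_smul, ← sq, ← mul_pow, mul_inv_cancel₀ hs, one_pow, one_smul]
  have hxyz : s • (x * (y * (s⁻¹ • z₀))) = (z₁ + z₀) * z₀ := by
    rw [← mul_assoc, hxy, mul_smul_comm, smul_inv_smul₀ hs]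
  rw [skeinCubic, hzz, hxyz, add_mul]
  abel

section MacdonaldCoeff

variable {K : Type*} [Field K]

/-- The coefficient `V(X)` of the rank-one Macdonald operator, with `τ` in the role of
`t^{1/2}`. -/
def macdonaldCoeff (τ X : K) : K := (τ * X - τ⁻¹ * X⁻¹) / (X - X⁻¹)

-- The convention `0⁻¹ = 0` lets the single condition `X ≠ X⁻¹` stand for `X ≠ 0` and `X² ≠ 1`.
theorem ne_zero_of_ne_inv {X : K} (hX : X ≠ X⁻¹) : X ≠ 0 := by
  rintro rfl
  exact hX inv_zero.symm

theorem macdonaldCoeff_mul_sub_inv (τ : K) {X : K} (hX : X ≠ X⁻¹) :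
    macdonaldCoeff τ X * (X - X⁻¹) = τ * X - τ⁻¹ * X⁻¹ :=
  div_mul_cancel₀ _ (sub_ne_zero.mpr hX)

theorem macdonaldCoeff_inv_mul_inv_sub (τ : K) {X : K} (hX : X ≠ X⁻¹) :
    macdonaldCoeff τ X⁻¹ * (X⁻¹ - X) = τ * X⁻¹ - τ⁻¹ * X := by
  simpa only [inv_inv] using
    macdonaldCoeff_mul_sub_inv τ (X := X⁻¹) (by rw [inv_inv]; exact hX.symm)

theorem macdonaldCoeff_add_inv (τ : K) {X : K} (hX : X ≠ X⁻¹) :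
    macdonaldCoeff τ X + macdonaldCoeff τ X⁻¹ = τ + τ⁻¹ := by
  apply mul_right_cancel₀ (sub_ne_zero.mpr hX)
  linear_combination macdonaldCoeff_mul_sub_inv τ hX - macdonaldCoeff_inv_mul_inv_sub τ hX

theorem sq_mul_macdonaldCoeff_add_inv (τ : K) {X : K} (hX : X ≠ X⁻¹) :
    X ^ 2 * macdonaldCoeff τ X + X⁻¹ ^ 2 * macdonaldCoeff τ X⁻¹ =
      τ * (X ^ 2 + 1 + X⁻¹ ^ 2) - τ⁻¹ := by
  have hXX : X * X⁻¹ = 1 := mul_inv_cancel₀ (ne_zero_of_ne_inv hX)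
  apply mul_right_cancel₀ (sub_ne_zero.mpr hX)
  linear_combination X ^ 2 * macdonaldCoeff_mul_sub_inv τ hX
    - X⁻¹ ^ 2 * macdonaldCoeff_inv_mul_inv_sub τ hX
    + (τ - τ⁻¹) * (X - X⁻¹) * hXX

end MacdonaldCoeff

section ShiftOperator

variable {F K : Type*} [Field F] [Field K] [Algebra F K]

/-- The first-order difference operator `u ϖ + v ϖ⁻¹`, the coefficients `u` and `v` acting by
multiplication. -/
def shiftOperator (ϖ : K ≃ₐ[F] K) (u v : K) : Module.End F K :=
  LinearMap.mulLeft F u ∘ₗ ϖ.toLinearMap + LinearMap.mulLeft F v ∘ₗ ϖ.symm.toLinearMap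

theorem shiftOperator_apply (ϖ : K ≃ₐ[F] K) (u v f : K) :
    shiftOperator ϖ u v f = u * ϖ f + v * ϖ.symm f := rfl

theorem smul_shiftOperator (ϖ : K ≃ₐ[F] K) (a : F) (u v : K) :
    a • shiftOperator ϖ u v =
      shiftOperator ϖ (algebraMap F K a * u) (algebraMap F K a * v) := by
  ext f
  simp only [LinearMap.smul_apply, shiftOperator_apply, Algebra.smul_def (A := K)]
  ring

theorem mulLeft_add_inv_mul_shiftOperator (ϖ : K ≃ₐ[F] K) (X u v : K) :
    LinearMap.mulLeft F (X + X⁻¹) * shiftOperator ϖ u v =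
      shiftOperator ϖ (X * u) (X⁻¹ * v) + shiftOperator ϖ (X⁻¹ * u) (X * v) := by
  ext f
  simp only [Module.End.mul_apply, LinearMap.add_apply, LinearMap.mulLeft_apply,
    shiftOperator_apply]
  ring

theorem shiftOperator_mul_apply (ϖ : K ≃ₐ[F] K) (u v u' v' f : K) :
    (shiftOperator ϖ u v * shiftOperator ϖ u' v') f =
      u * ϖ u' * ϖ (ϖ f) + (u * ϖ v' + v * ϖ.symm u') * f
        + v * ϖ.symm v' * ϖ.symm (ϖ.symm f) := by
  simp only [Module.End.mul_apply, shiftOperator_apply, map_add, map_mul,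
    AlgEquiv.apply_symm_apply, AlgEquiv.symm_apply_apply]
  ring

variable {ϖ : K ≃ₐ[F] K} {q : F} {X : K}

theorem scale_ne_zero (hX : X ≠ 0) (hϖ : ϖ X = algebraMap F K q * X) : q ≠ 0 := by
  rintro rfl
  rw [map_zero, zero_mul, map_eq_zero_iff ϖ ϖ.injective] at hϖ
  exact hX hϖ

theorem symm_apply_inv (hX : X ≠ 0) (hϖ : ϖ X = algebraMap F K q * X) :
    ϖ.symm X⁻¹ = algebraMap F K q * X⁻¹ := by
  have hq : algebraMap F K q ≠ 0 := (map_ne_zero _).mpr (scale_ne_zero hX hϖ)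
  rw [AlgEquiv.symm_apply_eq, map_mul, ϖ.commutes, map_inv₀, hϖ, mul_inv, mul_inv_cancel_left₀ hq]

theorem inv_smul_shiftOperator_mul_self_sub (hX : X ≠ 0) (hϖ : ϖ X = algebraMap F K q * X)
    (V W : K) :
    q⁻¹ • (shiftOperator ϖ V W * shiftOperator ϖ V W)
        - shiftOperator ϖ (X * V) (X⁻¹ * W) * shiftOperator ϖ (X⁻¹ * V) (X * W) =
      LinearMap.mulLeft F
        (((algebraMap F K q)⁻¹ - algebraMap F K q * X ^ 2) * (V * ϖ W)
          + ((algebraMap F K q)⁻¹ - algebraMap F K q * X⁻¹ ^ 2) * (W * ϖ.symm V)) := by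
  have hXX : X * X⁻¹ = 1 := mul_inv_cancel₀ hX
  have hϖ_inv : ϖ X⁻¹ = (algebraMap F K q)⁻¹ * X⁻¹ := by rw [map_inv₀, hϖ, mul_inv]
  have hϖ_symm_inv : ϖ.symm X⁻¹ = algebraMap F K q * X⁻¹ := symm_apply_inv hX hϖ
  have hϖ_symm : ϖ.symm X = (algebraMap F K q)⁻¹ * X := by
    rw [← inv_inv X, map_inv₀, hϖ_symm_inv, mul_inv]
  ext f
  simp only [LinearMap.sub_apply, LinearMap.smul_apply, shiftOperator_mul_apply,
    LinearMap.mulLeft_apply, Algebra.smul_def (A := K), map_mul, map_inv₀ (algebraMap F K), hϖ,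
    hϖ_inv, hϖ_symm, hϖ_symm_inv]
  linear_combination -(algebraMap F K q)⁻¹ *
    (V * ϖ V * ϖ (ϖ f) + W * ϖ.symm W * ϖ.symm (ϖ.symm f)) * hXX

theorem inv_sub_mul_apply_macdonaldCoeff_inv (hX : X ≠ X⁻¹)
    (hϖ : ϖ X = algebraMap F K q * X) (t : F) :
    ((algebraMap F K q)⁻¹ - algebraMap F K q * X ^ 2) * ϖ (macdonaldCoeff (algebraMap F K t) X⁻¹) =
      algebraMap F K t * (algebraMap F K q)⁻¹
        - (algebraMap F K t)⁻¹ * algebraMap F K q * X ^ 2 := by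
  have hXX : X * X⁻¹ = 1 := mul_inv_cancel₀ (ne_zero_of_ne_inv hX)
  have h := congrArg ϖ (macdonaldCoeff_inv_mul_inv_sub (algebraMap F K t) hX)
  simp only [map_mul, map_sub, map_inv₀ ϖ, ϖ.commutes, hϖ, mul_inv] at h
  linear_combination X * h + (algebraMap F K q)⁻¹ *
    (algebraMap F K t - ϖ (macdonaldCoeff (algebraMap F K t) X⁻¹)) * hXX

theorem order_zero_coeff_eq_scalar {t : F} (ht : t ≠ 0) (hX : X ≠ X⁻¹)
    (hϖ : ϖ X = algebraMap F K q * X) :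
    let c : F → K := algebraMap F K
    let V : K := macdonaldCoeff (c t) X
    let W : K := macdonaldCoeff (c t) X⁻¹
    c q * (X + X⁻¹) ^ 2 + (((c q)⁻¹ - c q * X ^ 2) * (V * ϖ W)
        + ((c q)⁻¹ - c q * X⁻¹ ^ 2) * (W * ϖ.symm V)) =
      c (q⁻¹ + q + q⁻¹ * t ^ 2 + (q⁻¹ * t ^ 2)⁻¹) := by
  intro c V W
  have hX0 : X ≠ 0 := ne_zero_of_ne_inv hX
  have hXX : X * X⁻¹ = 1 := mul_inv_cancel₀ hX0
  have htt : c t * (c t)⁻¹ = 1 := mul_inv_cancel₀ ((map_ne_zero _).mpr ht)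
  have hW : ((c q)⁻¹ - c q * X ^ 2) * ϖ W = c t * (c q)⁻¹ - (c t)⁻¹ * c q * X ^ 2 :=
    inv_sub_mul_apply_macdonaldCoeff_inv hX hϖ t
  -- The same identity for the automorphism `ϖ⁻¹`, which scales `X⁻¹` by `q`.
  have hV : ((c q)⁻¹ - c q * X⁻¹ ^ 2) * ϖ.symm V =
      c t * (c q)⁻¹ - (c t)⁻¹ * c q * X⁻¹ ^ 2 := by
    simpa only [inv_inv] using inv_sub_mul_apply_macdonaldCoeff_inv (X := X⁻¹)
      (by rw [inv_inv]; exact hX.symm) (symm_apply_inv hX0 hϖ) t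
  calc
    _ = c q * (X + X⁻¹) ^ 2 + c t * (c q)⁻¹ * (V + W)
          - (c t)⁻¹ * c q * (X ^ 2 * V + X⁻¹ ^ 2 * W) := by
      linear_combination V * hW + W * hV
    _ = c q * (X + X⁻¹) ^ 2 + c t * (c q)⁻¹ * (c t + (c t)⁻¹)
          - (c t)⁻¹ * c q * (c t * (X ^ 2 + 1 + X⁻¹ ^ 2) - (c t)⁻¹) := by
      rw [macdonaldCoeff_add_inv (c t) hX, sq_mul_macdonaldCoeff_add_inv (c t) hX]
    _ = (c q)⁻¹ + c q + (c q)⁻¹ * c t ^ 2 + ((c q)⁻¹ * c t ^ 2)⁻¹ := by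
      rw [mul_inv, inv_inv, ← inv_pow]
      linear_combination 2 * c q * hXX + ((c q)⁻¹ - c q * (X ^ 2 + 1 + X⁻¹ ^ 2)) * htt
    _ = c (q⁻¹ + q + q⁻¹ * t ^ 2 + (q⁻¹ * t ^ 2)⁻¹) := by
      simp only [c, map_add, map_mul, map_inv₀, map_pow]

end ShiftOperator

theorem cubic_relation_polynomial_rep_general {F K : Type*} [Field F] [Field K] [Algebra F K]
    {q2 t2 : F} (ht : t2 ≠ 0) {X : K} (hX : X ≠ X⁻¹) {ϖ : K ≃ₐ[F] K}
    (hϖ : ϖ X = algebraMap F K (q2 ^ 2) * X) :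
    let c : F → K := algebraMap F K
    let V : K := macdonaldCoeff (c t2) X
    let W : K := macdonaldCoeff (c t2) X⁻¹
    let lam : F := (q2 ^ 2)⁻¹ * t2 ^ 2
    skeinCubic q2 (LinearMap.mulLeft F (X + X⁻¹)) (shiftOperator ϖ V W)
        (shiftOperator ϖ (c q2⁻¹ * X⁻¹ * V) (c q2⁻¹ * X * W)) =
      ((q2 ^ 2)⁻¹ + q2 ^ 2 + lam + lam⁻¹) • (LinearMap.id : K →ₗ[F] K) := by
  intro c V W lam
  have hX0 : X ≠ 0 := ne_zero_of_ne_inv hX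
  have hq : q2 ≠ 0 := ne_zero_pow two_ne_zero (scale_ne_zero hX0 hϖ)
  have hz : shiftOperator ϖ (c q2⁻¹ * X⁻¹ * V) (c q2⁻¹ * X * W) =
      q2⁻¹ • shiftOperator ϖ (X⁻¹ * V) (X * W) := by
    rw [smul_shiftOperator, mul_assoc, mul_assoc]
  rw [hz, skeinCubic_inv_smul_of_mul_eq_add hq (mulLeft_add_inv_mul_shiftOperator ϖ X V W),
    inv_smul_shiftOperator_mul_self_sub hX0 hϖ]
  ext f
  simp only [LinearMap.add_apply, LinearMap.smul_apply, Module.End.mul_apply,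
    LinearMap.mulLeft_apply, LinearMap.id_apply, Algebra.smul_def (A := K)]
  linear_combination f * order_zero_coeff_eq_scalar ht hX hϖ

theorem ratFunc_X_ne_inv (F : Type*) [Field F] : (RatFunc.X : RatFunc F) ≠ RatFunc.X⁻¹ := by
  intro h
  have hdeg := congrArg RatFunc.intDegree h
  rw [RatFunc.intDegree_inv, RatFunc.intDegree_X] at hdeg
  omega

/-- with `A = q^{-1/2}` and `λ = q⁻¹t`, the operators
`x = X + X⁻¹`, `y = V(X)ϖ + V(X⁻¹)ϖ⁻¹`, `z = q^{-1/2}X⁻¹V(X)ϖ + q^{-1/2}XV(X⁻¹)ϖ⁻¹`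
on `F(X)` satisfy the cubic relation
`A⁻²x² + A²y² + A⁻²z² - A⁻¹xyz = (A² + A⁻² + λ + λ⁻¹)·Id`. -/
theorem cubic_relation_polynomial_rep
    (F : Type*) [Field F] (q2 t2 : F) (hq : q2 ≠ 0) (ht : t2 ≠ 0)
    (ϖ : RatFunc F ≃ₐ[F] RatFunc F)
    (hϖ : ϖ RatFunc.X = algebraMap F (RatFunc F) (q2 ^ 2) * RatFunc.X) :
    let X : RatFunc F := RatFunc.X
    let c : F → RatFunc F := algebraMap F (RatFunc F)
    let V : RatFunc F := (c t2 * X - c t2⁻¹ * X⁻¹) / (X - X⁻¹)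
    let W : RatFunc F := (c t2 * X⁻¹ - c t2⁻¹ * X) / (X⁻¹ - X)
    let x : RatFunc F →ₗ[F] RatFunc F := LinearMap.mulLeft F (X + X⁻¹)
    let y : RatFunc F →ₗ[F] RatFunc F :=
      LinearMap.mulLeft F V ∘ₗ ϖ.toLinearMap + LinearMap.mulLeft F W ∘ₗ ϖ.symm.toLinearMap
    let z : RatFunc F →ₗ[F] RatFunc F :=
      LinearMap.mulLeft F (c q2⁻¹ * X⁻¹ * V) ∘ₗ ϖ.toLinearMap +
        LinearMap.mulLeft F (c q2⁻¹ * X * W) ∘ₗ ϖ.symm.toLinearMap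
    let lam : F := (q2 ^ 2)⁻¹ * t2 ^ 2
    (q2 ^ 2) • (x ∘ₗ x) + ((q2 ^ 2)⁻¹) • (y ∘ₗ y) + (q2 ^ 2) • (z ∘ₗ z)
        - q2 • (x ∘ₗ y ∘ₗ z)
      = ((q2 ^ 2)⁻¹ + q2 ^ 2 + lam + lam⁻¹) • (LinearMap.id : RatFunc F →ₗ[F] RatFunc F) := by
  have h := cubic_relation_polynomial_rep_general ht (ratFunc_X_ne_inv F) hϖ
  simp only [macdonaldCoeff, inv_inv, ← map_inv₀ (algebraMap F (RatFunc F))] at h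
  exact h
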